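/- arXiv:0907.2577 — 2 statements merged into one kernel-verified Lean document; each statement's English description precedes it below -/
import Mathlib

section
/- For any prime p and any non-negative integers a, m, s, K with 0 ≤ a < p, the p-adic valuation of 𝐒(a,K,s,p,m) := Σ_{j=mp^s}^{(m+1)p^s−1} (𝐁_𝐍(a+jp)·𝐁_𝐍(K−j) − 𝐁_𝐍(j)·𝐁_𝐍(a+(K−j)p)) is at least (s+1) + v_p(𝐁_𝐍(m)), i.e., 𝐒(a,K,s,p,m) ∈ p^{s+1}·𝐁_𝐍(m)·ℤ_p. -/
open Finset

/-- The `n`-th harmonic number `H_n = 1 + 1/2 + ⋯ + 1/n`, as a rational (`H_0 = 0`). -/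
def harm (n : ℕ) : ℚ := ∑ i ∈ Finset.range n, (1 : ℚ) / (i + 1)

/-- Subsets of the set of distinct prime factors of `N` having even cardinality. -/
def evenSub (N : ℕ) : Finset (Finset ℕ) :=
  N.primeFactors.powerset.filter fun J => Even J.card

/-- Subsets of the set of distinct prime factors of `N` having odd cardinality. -/
def oddSub (N : ℕ) : Finset (Finset ℕ) :=
  N.primeFactors.powerset.filter fun J => Odd J.card

/-- `∏_{j=1}^μ (α_j m)!`, where the `α_j` are the quotients of `N` by products of evenly
many distinct prime factors of `N`. -/
def Bnum (N m : ℕ) : ℕ :=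
  ∏ J ∈ evenSub N, Nat.factorial ((N / ∏ p ∈ J, p) * m)

/-- `∏_{j=1}^η (β_j m)!`, where the `β_j` are the quotients of `N` by products of oddly
many distinct prime factors of `N`, padded with `φ(N)` entries equal to `1` (so that
`Σ α_j = Σ β_j`). -/
def Bden (N m : ℕ) : ℕ :=
  (∏ J ∈ oddSub N, Nat.factorial ((N / ∏ p ∈ J, p) * m)) * (Nat.factorial m) ^ N.totient

/-- `𝐁_N(m) = (∏ (α_j m)!)/(∏ (β_j m)!)`. -/
noncomputable def BB (N m : ℕ) : ℚ := (Bnum N m : ℚ) / (Bden N m : ℚ)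

/-- `𝐁_𝐍(m) = ∏_{j=1}^k 𝐁_{N_j}(m)` for a vector `𝐍 = (N_1, …, N_k)`. -/
noncomputable def BBvec {k : ℕ} (N : Fin k → ℕ) (m : ℕ) : ℚ := ∏ i, BB (N i) m

/-- `𝐁_𝐍` extended to the integers by the convention `𝐁_𝐍(n) = 0` for `n < 0`. -/
noncomputable def BBvecZ {k : ℕ} (N : Fin k → ℕ) (n : ℤ) : ℚ :=
  if 0 ≤ n then BBvec N n.toNat else 0

/-!
Dwork's formal congruences: let `A 0 = 1` and suppose that for every digit `v < p` the quotient
`x ↦ A (v + x * p) / A x` is `p`-integral and sends points congruent modulo `p ^ s` to values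
congruent modulo `p ^ (s + 1)`. The sum over all blocks of length `p ^ s` up to `K` vanishes by
symmetry. By the regularity of the quotients, the sum over the `m`-th block is, modulo
`p ^ (s + 1) * A m`, a combination of sums over smaller blocks near `0`, so the congruences follow
by induction on `s`, then on `K`.

For `𝐁_N` the padding by ones makes `𝐁_N(m)` the Möbius product over `d ∣ N` of the multinomial
coefficients `((N / d) m)! / m! ^ (N / d)`. Removing the multiples of `p` from the factorials splits
the quotient `𝐁_N(v + x p) / 𝐁_N(x)` into a Möbius product of `p`-adic units, which satisfy the
congruences by periodicity, and a Möbius product of the factors `p ((N / d) x + i)`. Inclusion–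
exclusion reduces the latter to a constant times the product of the `N x + k` over the
`k ≤ N v / p` prime to `N`. If `p ∣ N` these factors satisfy the congruences by themselves;
otherwise the constant contains exactly one power of `p` for each of them.
-/

/-- The extension of a sequence by zero to the negative integers, as in `BBvecZ`. -/
def extendZero {R : Type*} [Zero R] (A : ℕ → R) (n : ℤ) : R :=
  if 0 ≤ n then A n.toNat else 0

theorem extendZero_natCast {R : Type*} [Zero R] (A : ℕ → R) (n : ℕ) :
    extendZero A (n : ℤ) = A n := by
  simp [extendZero]

theorem extendZero_of_neg {R : Type*} [Zero R] (A : ℕ → R) {n : ℤ} (hn : n < 0) :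
    extendZero A n = 0 := by
  simp [extendZero, hn]

theorem sum_Ico_sum_Ico_mul {M : Type*} [AddCommMonoid M] (F : ℕ → ℕ → M) (q : ℕ) {a b : ℕ}
    (hab : a ≤ b) :
    ∑ i ∈ Ico a b, ∑ j ∈ Ico (i * q) ((i + 1) * q), F i j =
      ∑ j ∈ Ico (a * q) (b * q), F (j / q) j := by
  induction b, hab using Nat.le_induction with
  | base => simp
  | succ b hab ih =>
    rw [sum_Ico_succ_top hab, ih, ← sum_Ico_consecutive _ (Nat.mul_le_mul_right q hab)
      (Nat.mul_le_mul_right q b.le_succ)]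
    congr 1
    refine sum_congr rfl fun j hj => ?_
    rw [Nat.div_eq_of_lt_le (mem_Ico.1 hj).1 (mem_Ico.1 hj).2]

section DworkSum

variable {R : Type*} [CommRing R] (A : ℕ → R) (p : ℕ) {a : ℕ}

/-- The `j`-th term of the sum in Dwork's congruences. With `F = ∑ A n X ^ n`, both products occur
in the coefficient of `X ^ (a + K * p)` in `F(X) * F(X ^ p)`; the factor indexed by `j` comes from
`F(X)` in the first one and from `F(X ^ p)` in the second one. -/
def dworkTerm (a : ℕ) (K : ℤ) (j : ℕ) : R :=
  extendZero A (a + j * p) * extendZero A (K - j) -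
    extendZero A j * extendZero A (a + (K - j) * p)

/-- The sum of the terms `dworkTerm` over the `m`-th block of `p ^ s` consecutive indices. -/
def dworkSum (a s m : ℕ) (K : ℤ) : R :=
  ∑ j ∈ Ico (m * p ^ s) ((m + 1) * p ^ s), dworkTerm A p a K j

theorem dworkTerm_eq (K : ℤ) (j : ℕ) :
    dworkTerm A p a K j =
      A (a + j * p) * extendZero A (K - j) - A j * extendZero A (a + (K - j) * p) := by
  rw [dworkTerm, ← extendZero_natCast A j, ← extendZero_natCast A (a + j * p)]
  push_cast
  rfl

theorem dworkSum_zero (m : ℕ) (K : ℤ) : dworkSum A p a 0 m K = dworkTerm A p a K m := by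
  simp [dworkSum]

theorem dworkSum_succ (s m : ℕ) (K : ℤ) :
    dworkSum A p a (s + 1) m K = ∑ i ∈ Ico (m * p) ((m + 1) * p), dworkSum A p a s i K := by
  simp only [dworkSum]
  rw [sum_Ico_sum_Ico_mul _ _ (Nat.mul_le_mul_right p m.le_succ), pow_succ', mul_assoc, mul_assoc]

theorem sum_range_dworkTerm (K : ℕ) : ∑ j ∈ range (K + 1), dworkTerm A p a K j = 0 := by
  simp only [dworkTerm_eq, sum_sub_distrib]
  rw [sub_eq_zero, ← sum_flip]
  refine sum_congr rfl fun j hj => ?_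
  have hjK : j ≤ K := Nat.lt_succ_iff.1 (mem_range.1 hj)
  have hsub : (K : ℤ) - (K - j : ℕ) = j := by omega
  have hidx : (a : ℤ) + ((K : ℤ) - j) * p = (a + (K - j) * p : ℕ) := by
    push_cast [Nat.cast_sub hjK]
    rfl
  rw [hsub, hidx, extendZero_natCast, extendZero_natCast, mul_comm]

variable {p}

theorem dworkTerm_eq_zero_of_lt (ha : a < p) {K : ℤ} {j : ℕ} (hj : K < j) :
    dworkTerm A p a K j = 0 := by
  have hneg : (a : ℤ) + (K - j) * p < 0 := by nlinarith
  rw [dworkTerm, extendZero_of_neg A (sub_neg.2 hj), extendZero_of_neg A hneg, mul_zero, mul_zero,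
    sub_zero]

theorem dworkSum_eq_zero_of_lt (ha : a < p) {s m : ℕ} {K : ℤ} (hK : K < (m * p ^ s : ℕ)) :
    dworkSum A p a s m K = 0 :=
  sum_eq_zero fun _ hj =>
    dworkTerm_eq_zero_of_lt A ha (hK.trans_le (Nat.cast_le.2 (mem_Ico.1 hj).1))

theorem sum_range_dworkSum (ha : a < p) (s K : ℕ) :
    ∑ m ∈ range (K + 1), dworkSum A p a s m K = 0 := by
  have hle : K + 1 ≤ (K + 1) * p ^ s := Nat.le_mul_of_pos_right _ (pow_pos (Nat.zero_lt_of_lt ha) s)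
  simp only [dworkSum, range_eq_Ico]
  rw [sum_Ico_sum_Ico_mul _ _ (Nat.zero_le _), zero_mul, ← range_eq_Ico,
    ← sum_range_dworkTerm A p K]
  refine (sum_subset (range_mono hle) fun j _ hj => ?_).symm
  exact dworkTerm_eq_zero_of_lt A ha (Nat.cast_lt.2 (not_lt.1 (mem_range.not.1 hj)))

end DworkSum

/-- `f` is integral, and its values at points congruent modulo `p ^ s` agree modulo `p ^ (s + 1)`:
the regularity that Dwork's congruences require of the quotients `A (v + x * p) / A x`. -/
structure IsDworkFactor {𝕜 : Type*} [NormedField 𝕜] (p : ℕ) (f : ℕ → 𝕜) : Prop where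
  norm_le_one : ∀ x, ‖f x‖ ≤ 1
  norm_sub_le : ∀ {s x y}, x ≡ y [MOD p ^ s] → ‖f x - f y‖ ≤ ‖(p : 𝕜)‖ ^ (s + 1)

/-- The hypotheses of Dwork's congruences on a sequence `A`. -/
structure IsDworkSeq {𝕜 : Type*} [NormedField 𝕜] (p : ℕ) (A : ℕ → 𝕜) : Prop where
  map_zero : A 0 = 1
  ne_zero : ∀ n, A n ≠ 0
  isDworkFactor_div : ∀ v < p, IsDworkFactor p fun x => A (v + x * p) / A x

section Congruences

variable {𝕜 : Type*} [NormedField 𝕜] {p : ℕ} {A : ℕ → 𝕜} {a : ℕ}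

namespace IsDworkSeq

theorem norm_le_norm_div (hA : IsDworkSeq p A) (hp : 0 < p) (n : ℕ) : ‖A n‖ ≤ ‖A (n / p)‖ := by
  have h := (hA.isDworkFactor_div (n % p) (Nat.mod_lt n hp)).norm_le_one (n / p)
  rwa [Nat.mod_add_div', norm_div, div_le_one (norm_pos_iff.2 (hA.ne_zero _))] at h

theorem norm_add_mul_pow_le (hA : IsDworkSeq p A) (hp : 0 < p) {s j : ℕ} (hj : j < p ^ s) (m : ℕ) :
    ‖A (j + m * p ^ s)‖ ≤ ‖A m‖ := by
  induction s generalizing j with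
  | zero => simp [Nat.lt_one_iff.1 (pow_zero p ▸ hj)]
  | succ s ih =>
    have hdiv : (j + m * p ^ (s + 1)) / p = j / p + m * p ^ s := by
      rw [pow_succ, ← mul_assoc, Nat.add_mul_div_right _ _ hp]
    calc ‖A (j + m * p ^ (s + 1))‖ ≤ ‖A (j / p + m * p ^ s)‖ := hdiv ▸ hA.norm_le_norm_div hp _
      _ ≤ ‖A m‖ := ih (Nat.div_lt_of_lt_mul (pow_succ' p s ▸ hj))

theorem norm_le_one (hA : IsDworkSeq p A) (hp : 1 < p) (n : ℕ) : ‖A n‖ ≤ 1 := by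
  simpa [hA.map_zero] using hA.norm_add_mul_pow_le (Nat.zero_lt_of_lt hp) (Nat.lt_pow_self hp) 0

theorem norm_extendZero_le_one (hA : IsDworkSeq p A) (hp : 1 < p) (n : ℤ) :
    ‖extendZero A n‖ ≤ 1 := by
  unfold extendZero
  split_ifs
  · exact hA.norm_le_one hp _
  · simp

/-- The factor `A (j + m * p ^ (s + 1)) / A j` barely changes when the last digit is dropped from
both indices; multiplying by `A j` removes the denominators, which need not be units. -/
theorem norm_div_sub_div_mul_le (hA : IsDworkSeq p A) (hp : 0 < p) {s j : ℕ}
    (hj : j < p ^ (s + 1)) (m : ℕ) :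
    ‖A (j + m * p ^ (s + 1)) / A j - A (j / p + m * p ^ s) / A (j / p)‖ * ‖A j‖ ≤
      ‖(p : 𝕜)‖ ^ (s + 1) * ‖A m‖ := by
  have hu : j / p < p ^ s := Nat.div_lt_of_lt_mul (pow_succ' p s ▸ hj)
  have hE := hA.isDworkFactor_div (j % p) (Nat.mod_lt j hp)
  have hmod : j / p + m * p ^ s ≡ j / p [MOD p ^ s] := by simp [Nat.ModEq]
  have hidx : j + m * p ^ (s + 1) = j % p + (j / p + m * p ^ s) * p := by
    rw [add_mul, ← add_assoc, Nat.mod_add_div', pow_succ, mul_assoc]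
  have hfactor : (A (j + m * p ^ (s + 1)) / A j - A (j / p + m * p ^ s) / A (j / p)) * A j =
      (A (j % p + (j / p + m * p ^ s) * p) / A (j / p + m * p ^ s) -
        A (j % p + j / p * p) / A (j / p)) * A (j / p + m * p ^ s) := by
    have := hA.ne_zero j
    have := hA.ne_zero (j / p)
    have := hA.ne_zero (j / p + m * p ^ s)
    rw [← hidx, Nat.mod_add_div']
    field_simp
  rw [← norm_mul, hfactor, norm_mul]
  gcongr
  · exact hE.norm_sub_le hmod
  · exact hA.norm_add_mul_pow_le hp hu m

end IsDworkSeq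

/-- Dwork's approximations to `dworkSum A p a (t + r) m (K + m * p ^ (t + r))`: the block `m` is
moved to the block `0`, which is cut into `p ^ r` blocks of length `p ^ t`. -/
def transportedSum (A : ℕ → 𝕜) (p a t r m : ℕ) (K : ℤ) : 𝕜 :=
  ∑ j ∈ range (p ^ r), A (j + m * p ^ r) / A j * dworkSum A p a t j K

theorem transportedSum_succ_left (A : ℕ → 𝕜) (p a t r m : ℕ) (K : ℤ) :
    transportedSum A p a (t + 1) r m K =
      ∑ j ∈ range (p ^ (r + 1)), A (j / p + m * p ^ r) / A (j / p) * dworkSum A p a t j K := by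
  simp only [transportedSum, dworkSum_succ, mul_sum, range_eq_Ico]
  rw [sum_Ico_sum_Ico_mul _ _ (Nat.zero_le _), zero_mul, pow_succ]

variable [IsUltrametricDist 𝕜]

namespace IsDworkSeq

theorem norm_dworkSum_sub_transportedSum_zero_le (hA : IsDworkSeq p A) (hp : 1 < p) (ha : a < p)
    (r m : ℕ) (K : ℤ) :
    ‖dworkSum A p a r m (K + (m * p ^ r : ℕ)) - transportedSum A p a 0 r m K‖ ≤
      ‖(p : 𝕜)‖ ^ (r + 1) * ‖A m‖ := by
  have hsum : dworkSum A p a r m (K + (m * p ^ r : ℕ)) =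
      ∑ j ∈ range (p ^ r), dworkTerm A p a (K + (m * p ^ r : ℕ)) (j + m * p ^ r) := by
    rw [dworkSum, sum_Ico_eq_sum_range, add_mul, one_mul, Nat.add_sub_cancel_left]
    simp only [add_comm (m * p ^ r)]
  rw [hsum, transportedSum, ← sum_sub_distrib]
  refine IsUltrametricDist.norm_sum_le_of_forall_le_of_nonneg (by positivity) fun j hj => ?_
  have hlt : a + j * p < p ^ (r + 1) := by
    calc a + j * p < (j + 1) * p := by linarith
      _ ≤ p ^ r * p := Nat.mul_le_mul_right p (mem_range.1 hj)
      _ = p ^ (r + 1) := (pow_succ p r).symm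
  have hdiv : (a + j * p) / p = j := by
    rw [Nat.add_mul_div_right _ _ (Nat.zero_lt_of_lt ha), Nat.div_eq_of_lt ha, zero_add]
  have hterm : dworkTerm A p a (K + (m * p ^ r : ℕ)) (j + m * p ^ r) -
      A (j + m * p ^ r) / A j * dworkSum A p a 0 j K =
      (A (a + j * p + m * p ^ (r + 1)) / A (a + j * p) - A (j + m * p ^ r) / A j) *
        A (a + j * p) * extendZero A (K - j) := by
    have := hA.ne_zero j
    have := hA.ne_zero (a + j * p)
    have hK : K + (m * p ^ r : ℕ) - (j + m * p ^ r : ℕ) = K - j := by push_cast; ring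
    have hidx : a + (j + m * p ^ r) * p = a + j * p + m * p ^ (r + 1) := by ring
    rw [dworkSum_zero, dworkTerm_eq, dworkTerm_eq, hK, hidx]
    field_simp
    ring
  have hratio := hA.norm_div_sub_div_mul_le (Nat.zero_lt_of_lt ha) hlt m
  rw [hdiv, ← norm_mul] at hratio
  rw [hterm, norm_mul]
  exact (mul_le_of_le_one_right (norm_nonneg _) (hA.norm_extendZero_le_one hp _)).trans hratio

theorem norm_transportedSum_sub_succ_le (hA : IsDworkSeq p A) (hp : 0 < p) {t : ℕ} {K : ℤ}
    (ht : ∀ j, ‖dworkSum A p a t j K‖ ≤ ‖(p : 𝕜)‖ ^ (t + 1) * ‖A j‖) (r m : ℕ) :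
    ‖transportedSum A p a t (r + 1) m K - transportedSum A p a (t + 1) r m K‖ ≤
      ‖(p : 𝕜)‖ ^ (t + r + 2) * ‖A m‖ := by
  rw [transportedSum_succ_left, transportedSum, ← sum_sub_distrib]
  refine IsUltrametricDist.norm_sum_le_of_forall_le_of_nonneg (by positivity) fun j hj => ?_
  rw [← sub_mul, norm_mul]
  set δ := ‖A (j + m * p ^ (r + 1)) / A j - A (j / p + m * p ^ r) / A (j / p)‖
  calc δ * ‖dworkSum A p a t j K‖ ≤ δ * (‖(p : 𝕜)‖ ^ (t + 1) * ‖A j‖) := by gcongr; exact ht j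
    _ = δ * ‖A j‖ * ‖(p : 𝕜)‖ ^ (t + 1) := by ring
    _ ≤ ‖(p : 𝕜)‖ ^ (r + 1) * ‖A m‖ * ‖(p : 𝕜)‖ ^ (t + 1) := 
      mul_le_mul_of_nonneg_right (hA.norm_div_sub_div_mul_le hp (mem_range.1 hj) m) (by positivity)
    _ = ‖(p : 𝕜)‖ ^ (t + r + 2) * ‖A m‖ := by ring

theorem norm_dworkSum_sub_transportedSum_le (hA : IsDworkSeq p A) (hp : 1 < p) (ha : a < p)
    {K : ℤ} {t r : ℕ}
    (ht : ∀ u < t, ∀ j, ‖dworkSum A p a u j K‖ ≤ ‖(p : 𝕜)‖ ^ (u + 1) * ‖A j‖) (m : ℕ) :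
    ‖dworkSum A p a (t + r) m (K + (m * p ^ (t + r) : ℕ)) - transportedSum A p a t r m K‖ ≤
      ‖(p : 𝕜)‖ ^ (t + r + 1) * ‖A m‖ := by
  induction t generalizing r with
  | zero => simpa using hA.norm_dworkSum_sub_transportedSum_zero_le hp ha r m K
  | succ t ih =>
    have ih := ih (r := r + 1) fun u hu => ht u (hu.trans t.lt_succ_self)
    have hstep :=
      hA.norm_transportedSum_sub_succ_le (Nat.zero_lt_of_lt ha) (ht t t.lt_succ_self) r m
    rw [← sub_add_sub_cancel _ (transportedSum A p a t (r + 1) m K), add_right_comm t 1 r]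
    exact (IsUltrametricDist.norm_add_le_max _ _).trans (max_le ih hstep)

theorem norm_dworkSum_le_of_norm_dworkSum_zero_le (hA : IsDworkSeq p A) (hp : 1 < p) (ha : a < p)
    {s : ℕ} {K : ℤ} (hs : ∀ u < s, ∀ j, ‖dworkSum A p a u j K‖ ≤ ‖(p : 𝕜)‖ ^ (u + 1) * ‖A j‖)
    (h0 : ‖dworkSum A p a s 0 K‖ ≤ ‖(p : 𝕜)‖ ^ (s + 1)) (m : ℕ) :
    ‖dworkSum A p a s m (K + (m * p ^ s : ℕ))‖ ≤ ‖(p : 𝕜)‖ ^ (s + 1) * ‖A m‖ := by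
  have htransport : transportedSum A p a s 0 m K = A m * dworkSum A p a s 0 K := by
    simp [transportedSum, hA.map_zero]
  have hsub := hA.norm_dworkSum_sub_transportedSum_le hp ha (r := 0) hs m
  rw [add_zero, htransport] at hsub
  rw [← sub_add_cancel (dworkSum A p a s m _) (A m * dworkSum A p a s 0 K)]
  refine (IsUltrametricDist.norm_add_le_max _ _).trans (max_le hsub ?_)
  rw [norm_mul, mul_comm]
  gcongr

theorem norm_dworkSum_zero_le (hA : IsDworkSeq p A) (hp : 1 < p) (ha : a < p) {s : ℕ}
    (hs : ∀ u < s, ∀ j (K : ℤ), ‖dworkSum A p a u j K‖ ≤ ‖(p : 𝕜)‖ ^ (u + 1) * ‖A j‖) (K : ℤ) :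
    ‖dworkSum A p a s 0 K‖ ≤ ‖(p : 𝕜)‖ ^ (s + 1) := by
  obtain hK | ⟨n, rfl⟩ : K < 0 ∨ ∃ n : ℕ, K = n :=
    (lt_or_ge K 0).imp_right Int.eq_ofNat_of_zero_le
  · rw [dworkSum_eq_zero_of_lt A ha (by simpa using hK), norm_zero]
    positivity
  induction n using Nat.strong_induction_on with
  | _ n ih =>
  have hsum := sum_range_dworkSum A ha s n
  rw [sum_range_succ', add_eq_zero_iff_eq_neg'] at hsum
  rw [hsum, norm_neg]
  refine IsUltrametricDist.norm_sum_le_of_forall_le_of_nonneg (by positivity) fun i _ => ?_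
  obtain hlt | hle := lt_or_ge n ((i + 1) * p ^ s)
  · rw [dworkSum_eq_zero_of_lt A ha (Nat.cast_lt.2 hlt), norm_zero]
    positivity
  · obtain ⟨k, rfl⟩ := Nat.exists_eq_add_of_le' hle
    have hpos : 0 < (i + 1) * p ^ s := by positivity
    have h := hA.norm_dworkSum_le_of_norm_dworkSum_zero_le hp ha (fun u hu j => hs u hu j k)
      (ih k (Nat.lt_add_of_pos_right hpos)) (i + 1)
    rw [Nat.cast_add]
    exact h.trans (mul_le_of_le_one_right (by positivity) (hA.norm_le_one hp _))

theorem norm_dworkSum_le (hA : IsDworkSeq p A) (hp : 1 < p) (ha : a < p) (s m : ℕ) (K : ℤ) :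
    ‖dworkSum A p a s m K‖ ≤ ‖(p : 𝕜)‖ ^ (s + 1) * ‖A m‖ := by
  induction s using Nat.strong_induction_on generalizing m K with
  | _ s ih =>
  rw [← sub_add_cancel K (m * p ^ s : ℕ)]
  exact hA.norm_dworkSum_le_of_norm_dworkSum_zero_le hp ha (fun u hu j => ih u hu j _)
    (hA.norm_dworkSum_zero_le hp ha ih _) m

end IsDworkSeq

end Congruences

section Closure

variable {𝕜 : Type*} [NormedField 𝕜] {p : ℕ} {f g : ℕ → 𝕜}

namespace IsDworkFactor

theorem const {c : 𝕜} (hc : ‖c‖ ≤ 1) : IsDworkFactor p fun _ => c where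
  norm_le_one _ := hc
  norm_sub_le _ := by
    rw [sub_self, norm_zero]
    positivity

theorem inv (hf : IsDworkFactor p f) (h1 : ∀ x, ‖f x‖ = 1) : IsDworkFactor p fun x => (f x)⁻¹ where
  norm_le_one x := by simp [h1]
  norm_sub_le {s x y} h := by
    have hne (x : ℕ) : f x ≠ 0 := norm_ne_zero_iff.1 (by simp [h1])
    rw [inv_sub_inv (hne x) (hne y), norm_div, norm_mul, h1, h1, norm_sub_rev, mul_one, div_one]
    exact hf.norm_sub_le h

end IsDworkFactor

variable [IsUltrametricDist 𝕜]

theorem norm_natCast_sub_le_of_modEq {n a b : ℕ} (h : a ≡ b [MOD n]) :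
    ‖(a : 𝕜) - b‖ ≤ ‖(n : 𝕜)‖ := by
  wlog hab : a ≤ b generalizing a b
  · rw [norm_sub_rev]
    exact this h.symm (le_of_not_ge hab)
  obtain ⟨t, rfl⟩ := (Nat.modEq_iff_exists_eq_add hab).1 h
  rw [norm_sub_rev, Nat.cast_add, add_sub_cancel_left, Nat.cast_mul, norm_mul]
  exact mul_le_of_le_one_right (norm_nonneg _) (IsUltrametricDist.norm_natCast_le_one 𝕜 t)

namespace IsDworkFactor

theorem natCast {u : ℕ → ℕ} (hu : ∀ {s x y}, x ≡ y [MOD p ^ s] → u x ≡ u y [MOD p ^ (s + 1)]) :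
    IsDworkFactor p fun x => (u x : 𝕜) where
  norm_le_one _ := IsUltrametricDist.norm_natCast_le_one 𝕜 _
  norm_sub_le h := by simpa using norm_natCast_sub_le_of_modEq (𝕜 := 𝕜) (hu h)

theorem natCast_mul_add {N : ℕ} (hN : p ∣ N) (k : ℕ) :
    IsDworkFactor p fun x => ((N * x + k : ℕ) : 𝕜) := by
  obtain ⟨M, rfl⟩ := hN
  refine natCast fun {s x y} h => Nat.ModEq.add_right k ?_
  rw [mul_assoc, mul_assoc, pow_succ']
  exact (h.mul_left M).mul_left' p

theorem mul (hf : IsDworkFactor p f) (hg : IsDworkFactor p g) :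
    IsDworkFactor p fun x => f x * g x where
  norm_le_one x := by
    rw [norm_mul]
    exact mul_le_one₀ (hf.norm_le_one x) (norm_nonneg _) (hg.norm_le_one x)
  norm_sub_le {s x y} h := by
    rw [← sub_add_sub_cancel _ (f x * g y), ← mul_sub, ← sub_mul]
    refine (IsUltrametricDist.norm_add_le_max _ _).trans (max_le ?_ ?_) <;> rw [norm_mul]
    · exact (mul_le_of_le_one_left (norm_nonneg _) (hf.norm_le_one x)).trans (hg.norm_sub_le h)
    · exact (mul_le_of_le_one_right (norm_nonneg _) (hg.norm_le_one y)).trans (hf.norm_sub_le h)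

theorem prod {ι : Type*} {S : Finset ι} {F : ι → ℕ → 𝕜} (hF : ∀ i ∈ S, IsDworkFactor p (F i)) :
    IsDworkFactor p fun x => ∏ i ∈ S, F i x := by
  induction S using Finset.cons_induction with
  | empty => simpa using const (p := p) (c := (1 : 𝕜)) (by simp)
  | cons i S hi ih =>
    rw [forall_mem_cons] at hF
    simpa only [prod_cons] using hF.1.mul (ih hF.2)

end IsDworkFactor

theorem IsDworkSeq.prod {ι : Type*} {S : Finset ι} {A : ι → ℕ → 𝕜}
    (hA : ∀ i ∈ S, IsDworkSeq p (A i)) : IsDworkSeq p fun n => ∏ i ∈ S, A i n where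
  map_zero := prod_eq_one fun i hi => (hA i hi).map_zero
  ne_zero n := prod_ne_zero_iff.2 fun i hi => (hA i hi).ne_zero n
  isDworkFactor_div v hv := by
    simp only [← prod_div_distrib]
    exact IsDworkFactor.prod fun i hi => (hA i hi).isDworkFactor_div v hv

end Closure

theorem prod_Icc_div_eq_prod_filter_dvd {M : Type*} [CommMonoid M] (f : ℕ → M) {d : ℕ} (hd : 0 < d)
    (L : ℕ) :
    ∏ i ∈ Icc 1 (L / d), f (i * d) = ∏ k ∈ Icc 1 L with d ∣ k, f k := by
  refine prod_nbij (· * d) (fun i hi => ?_) (fun i _ j _ h => Nat.eq_of_mul_eq_mul_right hd h)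
    (fun k hk => ?_) fun _ _ => rfl
  · rw [mem_Icc, Nat.le_div_iff_mul_le hd] at hi
    exact mem_filter.2 ⟨mem_Icc.2 ⟨Nat.mul_pos hi.1 hd, hi.2⟩, dvd_mul_left d i⟩
  · obtain ⟨hk, hdk⟩ := mem_filter.1 hk
    rw [mem_Icc] at hk
    exact ⟨k / d, mem_coe.2 (mem_Icc.2 ⟨Nat.div_pos (Nat.le_of_dvd hk.1 hdk) hd,
      Nat.div_le_div_right hk.2⟩), Nat.div_mul_cancel hdk⟩

theorem prod_zpow_eq_zpow_sum₀ {ι G : Type*} [CommGroupWithZero G] {x : G} (hx : x ≠ 0)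
    (s : Finset ι) (e : ι → ℤ) : ∏ i ∈ s, x ^ e i = x ^ ∑ i ∈ s, e i := by
  induction s using Finset.cons_induction with
  | empty => simp
  | cons i s hi ih => rw [prod_cons, sum_cons, ih, zpow_add₀ hx]

theorem prod_primes_dvd_iff {J : Finset ℕ} (hJ : ∀ q ∈ J, q.Prime) {k : ℕ} :
    ∏ q ∈ J, q ∣ k ↔ ∀ q ∈ J, q ∣ k :=
  ⟨fun h _ hq => (dvd_prod_of_mem _ hq).trans h, prod_primes_dvd k fun q hq => (hJ q hq).prime⟩

section MoebiusProd

/-- The multiplicative Möbius sum `∏ F(d) ^ μ(d)` over the products `d` of distinct elements of a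
set `P` of primes. The exponent is written `(-1) ^ #J` with `J` the set of factors of `d`. -/
def moebiusProd {G : Type*} [CommGroupWithZero G] (P : Finset ℕ) (F : ℕ → G) : G :=
  ∏ J ∈ P.powerset, F (∏ q ∈ J, q) ^ ((-1 : ℤ) ^ #J)

variable {G : Type*} [CommGroupWithZero G] {P : Finset ℕ} {F F' : ℕ → G}

theorem moebiusProd_congr (h : ∀ d, d ∣ ∏ q ∈ P, q → F d = F' d) :
    moebiusProd P F = moebiusProd P F' :=
  prod_congr rfl fun J hJ => by rw [h _ (prod_dvd_prod_of_subset _ _ _ (mem_powerset.1 hJ))]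

theorem moebiusProd_mul :
    moebiusProd P (fun d => F d * F' d) = moebiusProd P F * moebiusProd P F' := by
  simp only [moebiusProd, mul_zpow, prod_mul_distrib]

theorem moebiusProd_div :
    moebiusProd P (fun d => F d / F' d) = moebiusProd P F / moebiusProd P F' := by
  simp only [moebiusProd, div_zpow, prod_div_distrib]

theorem moebiusProd_ne_zero (h : ∀ d, F d ≠ 0) : moebiusProd P F ≠ 0 :=
  prod_ne_zero_iff.2 fun _ _ => zpow_ne_zero _ (h _)

theorem map_moebiusProd {H Φ : Type*} [CommGroupWithZero H] [FunLike Φ G H]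
    [MonoidWithZeroHomClass Φ G H] (φ : Φ) :
    φ (moebiusProd P F) = moebiusProd P fun d => φ (F d) := by
  simp only [moebiusProd, map_prod, map_zpow₀]

theorem moebiusProd_eq_prod_even_div_prod_odd :
    moebiusProd P F = (∏ J ∈ P.powerset with Even #J, F (∏ q ∈ J, q)) /
      ∏ J ∈ P.powerset with Odd #J, F (∏ q ∈ J, q) := by
  rw [moebiusProd, ← prod_filter_mul_prod_filter_not _ (fun J => Even #J), div_eq_mul_inv,
    ← prod_inv_distrib]
  simp only [Nat.not_even_iff_odd]
  congr 1 <;> refine prod_congr rfl fun J hJ => ?_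
  · rw [(mem_filter.1 hJ).2.neg_one_pow, zpow_one]
  · rw [(mem_filter.1 hJ).2.neg_one_pow, zpow_neg_one]

theorem moebiusProd_erase {p : ℕ} (h : ∀ d, p ∣ d → F d = 1) :
    moebiusProd P F = moebiusProd (P.erase p) F := by
  refine (prod_subset (powerset_mono.2 (erase_subset p P)) fun J hJ hJp => ?_).symm
  have hpJ : p ∈ J := by
    by_contra hpJ
    exact hJp (mem_powerset.2 (subset_erase.2 ⟨mem_powerset.1 hJ, hpJ⟩))
  rw [h _ (dvd_prod_of_mem _ hpJ), one_zpow]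

theorem IsDworkFactor.moebiusProd {𝕜 : Type*} [NormedField 𝕜] [IsUltrametricDist 𝕜] {p : ℕ}
    {f : ℕ → ℕ → 𝕜} (hf : ∀ d, IsDworkFactor p (f d)) (h1 : ∀ d x, ‖f d x‖ = 1) :
    IsDworkFactor p fun x => moebiusProd P fun d => f d x := by
  simp only [moebiusProd_eq_prod_even_div_prod_odd, div_eq_mul_inv]
  refine (prod fun J _ => hf _).mul ((prod fun J _ => hf _).inv fun x => ?_)
  simp [norm_prod, h1]

/-- Inclusion–exclusion: the exponents of `f k` add up to zero unless `k` is prime to `P`. -/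
theorem moebiusProd_prod_Icc (hP : ∀ q ∈ P, q.Prime) {f : ℕ → G} (hf : ∀ k, 0 < k → f k ≠ 0)
    (L : ℕ) :
    moebiusProd P (fun d => ∏ i ∈ Icc 1 (L / d), f (i * d)) =
      ∏ k ∈ Icc 1 L with ∀ q ∈ P, ¬ q ∣ k, f k := by
  have hterm : ∀ J ∈ P.powerset,
      (∏ i ∈ Icc 1 (L / ∏ q ∈ J, q), f (i * ∏ q ∈ J, q)) ^ ((-1 : ℤ) ^ #J) =
        ∏ k ∈ Icc 1 L with ∀ q ∈ J, q ∣ k, f k ^ ((-1 : ℤ) ^ #J) := fun J hJ => by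
    have hJ : ∀ q ∈ J, q.Prime := fun q hq => hP q (mem_powerset.1 hJ hq)
    rw [prod_Icc_div_eq_prod_filter_dvd f (prod_pos fun q hq => (hJ q hq).pos), prod_zpow]
    simp only [prod_primes_dvd_iff hJ]
  have hswap : ∀ J k, J ∈ P.powerset ∧ k ∈ (Icc 1 L).filter (fun k => ∀ q ∈ J, q ∣ k) ↔
      J ∈ (P.filter (· ∣ k)).powerset ∧ k ∈ Icc 1 L := fun J k => by
    simp only [mem_powerset, mem_filter, subset_iff]
    grind
  rw [moebiusProd, prod_congr rfl hterm, prod_comm' hswap, prod_filter]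
  refine prod_congr rfl fun k hk => ?_
  rw [prod_zpow_eq_zpow_sum₀ (hf k (mem_Icc.1 hk).1), sum_powerset_neg_one_pow_card]
  simp only [filter_eq_empty_iff]
  split_ifs <;> simp

theorem moebiusProd_pow_div (hP : ∀ q ∈ P, q.Prime) {x : G} (hx : x ≠ 0) (L : ℕ) :
    moebiusProd P (fun d => x ^ (L / d)) = x ^ #{k ∈ Icc 1 L | ∀ q ∈ P, ¬ q ∣ k} := by
  simpa using moebiusProd_prod_Icc hP (f := fun _ => x) (fun _ _ => hx) L

theorem card_filter_primeFactors_not_dvd (N : ℕ) :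
    #{k ∈ Icc 1 N | ∀ q ∈ N.primeFactors, ¬ q ∣ k} = N.totient := by
  obtain rfl | hN := eq_or_ne N 0
  · rfl
  rw [← Nat.filter_coprime_Ico_eq_totient N 1, add_comm 1 N, Ico_add_one_right_eq_Icc]
  refine congr_arg card (filter_congr fun k _ => ?_)
  rw [← not_iff_not, Nat.Prime.not_coprime_iff_dvd]
  simp [Nat.mem_primeFactors, hN]

end MoebiusProd

section PrimeToFactorial

/-- The product of the integers in `[1, n]` not divisible by `p`, i.e. the `p`-free part of the
product defining `n!`. -/
def primeToFactorial (p n : ℕ) : ℕ := ∏ k ∈ Icc 1 n with ¬ p ∣ k, k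

variable {p : ℕ}

theorem primeToFactorial_succ (p n : ℕ) :
    primeToFactorial p (n + 1) = primeToFactorial p n * if p ∣ n + 1 then 1 else n + 1 := by
  rw [primeToFactorial, primeToFactorial, prod_filter, prod_filter, prod_Icc_succ_top (by omega),
    ite_not]

theorem primeToFactorial_mul_factorial_div (hp : 0 < p) (n : ℕ) :
    primeToFactorial p n * (p ^ (n / p) * (n / p).factorial) = n.factorial := by
  rw [← prod_Ico_id_eq_factorial n, Ico_add_one_right_eq_Icc,
    ← prod_filter_mul_prod_filter_not _ (p ∣ ·), ← prod_Icc_div_eq_prod_filter_dvd _ hp,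
    prod_mul_distrib, prod_const, ← Ico_add_one_right_eq_Icc, prod_Ico_id_eq_factorial,
    Nat.card_Ico, primeToFactorial, Nat.add_sub_cancel]
  ring

theorem coprime_primeToFactorial (hp : p.Prime) (n : ℕ) : p.Coprime (primeToFactorial p n) :=
  Nat.Coprime.prod_right fun _ hk => hp.coprime_iff_not_dvd.2 (mem_filter.1 hk).2

theorem primeToFactorial_add_modEq {q : ℕ} (hq : p ∣ q) (n : ℕ) :
    primeToFactorial p (n + q) ≡ primeToFactorial p n * primeToFactorial p q [MOD q] := by
  induction n with
  | zero => simp [primeToFactorial, Nat.ModEq.refl]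
  | succ n ih =>
    have hdvd : p ∣ n + 1 + q ↔ p ∣ n + 1 := Nat.dvd_add_left hq
    rw [add_right_comm, primeToFactorial_succ, primeToFactorial_succ, mul_right_comm,
      add_right_comm n q 1]
    simp only [hdvd]
    refine ih.mul ?_
    split_ifs
    · rfl
    · simp [Nat.ModEq]

theorem primeToFactorial_add_mul_modEq {q : ℕ} (hq : p ∣ q) (n t : ℕ) :
    primeToFactorial p (n + t * q) ≡ primeToFactorial p n * primeToFactorial p q ^ t [MOD q] := by
  induction t with
  | zero => simp [Nat.ModEq.refl]
  | succ t ih =>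
    rw [add_mul, one_mul, ← add_assoc, pow_succ, ← mul_assoc]
    exact (primeToFactorial_add_modEq hq _).trans (ih.mul_right _)

theorem primeToFactorial_mul_mul_pow_modEq {q x y : ℕ} (hq : p ∣ q) (c : ℕ) (h : x ≡ y [MOD q]) :
    primeToFactorial p (c * x) * primeToFactorial p y ^ c ≡
      primeToFactorial p (c * y) * primeToFactorial p x ^ c [MOD q] := by
  wlog hxy : x ≤ y generalizing x y
  · exact (this h.symm (le_of_not_ge hxy)).symm
  obtain ⟨t, rfl⟩ := (Nat.modEq_iff_exists_eq_add hxy).1 h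
  have hy := (primeToFactorial_add_mul_modEq hq x t).pow c
  have hcy := primeToFactorial_add_mul_modEq hq (c * x) (c * t)
  calc primeToFactorial p (c * x) * primeToFactorial p (x + q * t) ^ c
    _ ≡ primeToFactorial p (c * x) * (primeToFactorial p x * primeToFactorial p q ^ t) ^ c
        [MOD q] := by
      rw [mul_comm q]
      exact hy.mul_left _
    _ = primeToFactorial p (c * x) * primeToFactorial p q ^ (c * t) * primeToFactorial p x ^ c := by
      ring
    _ ≡ primeToFactorial p (c * (x + q * t)) * primeToFactorial p x ^ c [MOD q] := by
      rw [mul_add, mul_comm q, ← mul_assoc]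
      exact hcy.symm.mul_right _

variable [hp : Fact p.Prime]

theorem norm_primeToFactorial (n : ℕ) : ‖(primeToFactorial p n : ℚ_[p])‖ = 1 :=
  Padic.norm_natCast_eq_one_iff.2 (coprime_primeToFactorial hp.out n)

theorem norm_primeToFactorial_div_pow (c y : ℕ) :
    ‖(primeToFactorial p (c * y) / primeToFactorial p y ^ c : ℚ_[p])‖ = 1 := by
  simp [norm_primeToFactorial]

theorem isDworkFactor_primeToFactorial_div_pow (c v : ℕ) :
    IsDworkFactor p fun x =>
      (primeToFactorial p (c * (v + x * p)) / primeToFactorial p (v + x * p) ^ c : ℚ_[p]) where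
  norm_le_one _ := (norm_primeToFactorial_div_pow c _).le
  norm_sub_le {s x y} h := by
    have hne (n : ℕ) : (primeToFactorial p n : ℚ_[p]) ^ c ≠ 0 :=
      pow_ne_zero _ (norm_ne_zero_iff.1 (by simp [norm_primeToFactorial]))
    have hmod : v + x * p ≡ v + y * p [MOD p ^ (s + 1)] := (h.mul_right' p).add_left v
    have hle := norm_natCast_sub_le_of_modEq (𝕜 := ℚ_[p])
      (primeToFactorial_mul_mul_pow_modEq (dvd_pow_self p s.succ_ne_zero) c hmod)
    rw [div_sub_div _ _ (hne _) (hne _), norm_div, norm_mul, norm_pow, norm_pow,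
      norm_primeToFactorial, norm_primeToFactorial, one_pow, mul_one, div_one,
      mul_comm _ (primeToFactorial p (c * (v + y * p)) : ℚ_[p])]
    simpa only [Nat.cast_mul, Nat.cast_pow, norm_pow] using hle

end PrimeToFactorial

section DiagMultinomial

/-- The multinomial coefficient `(c * m)! / m! ^ c`. -/
def diagMultinomial (c m : ℕ) : ℕ := Nat.multinomial (range c) fun _ => m

theorem diagMultinomial_mul_factorial_pow (c m : ℕ) :
    diagMultinomial c m * m.factorial ^ c = (c * m).factorial := by
  simpa [diagMultinomial, mul_comm] using Nat.multinomial_spec (range c) fun _ => m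

theorem diagMultinomial_pos (c m : ℕ) : 0 < diagMultinomial c m :=
  Nat.multinomial_pos _ _

theorem factorial_mul_prod_Icc (n k : ℕ) :
    n.factorial * ∏ i ∈ Icc 1 k, (n + i) = (n + k).factorial := by
  induction k with
  | zero => simp
  | succ k ih =>
    rw [prod_Icc_succ_top (by omega), ← mul_assoc, ih, ← add_assoc, Nat.factorial_succ, mul_comm]

theorem diagMultinomial_mul_primeToFactorial_pow {p v : ℕ} (hv : v < p) (c x : ℕ) :
    diagMultinomial c (v + x * p) * primeToFactorial p (v + x * p) ^ c =
      diagMultinomial c x * primeToFactorial p (c * (v + x * p)) *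
        ∏ i ∈ Icc 1 (c * v / p), p * (c * x + i) := by
  have hp : 0 < p := Nat.zero_lt_of_lt hv
  have hdiv : (v + x * p) / p = x := by
    rw [Nat.add_mul_div_right _ _ hp, Nat.div_eq_of_lt hv, zero_add]
  have hcdiv : c * (v + x * p) / p = c * x + c * v / p := by
    rw [mul_add, ← mul_assoc, Nat.add_mul_div_right _ _ hp, add_comm]
  have hy := primeToFactorial_mul_factorial_div hp (v + x * p)
  have hcy := primeToFactorial_mul_factorial_div hp (c * (v + x * p))
  rw [hdiv] at hy
  rw [hcdiv, ← factorial_mul_prod_Icc, ← diagMultinomial_mul_factorial_pow c x,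
    ← diagMultinomial_mul_factorial_pow c (v + x * p), ← hy] at hcy
  have hpos : 0 < p ^ (c * x) * x.factorial ^ c := by positivity
  refine Nat.eq_of_mul_eq_mul_right hpos ?_
  rw [prod_mul_distrib, prod_const, Nat.card_Icc, Nat.add_sub_cancel]
  linear_combination (exp := 1) -hcy

theorem diagMultinomial_div_diagMultinomial {p v : ℕ} [Fact p.Prime] (hv : v < p) (c x : ℕ) :
    (diagMultinomial c (v + x * p) / diagMultinomial c x : ℚ_[p]) =
      primeToFactorial p (c * (v + x * p)) / primeToFactorial p (v + x * p) ^ c *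
        ∏ i ∈ Icc 1 (c * v / p), (p * (c * x + i) : ℚ_[p]) := by
  have hdiag : (diagMultinomial c x : ℚ_[p]) ≠ 0 :=
    Nat.cast_ne_zero.2 (diagMultinomial_pos c x).ne'
  have hfac : (primeToFactorial p (v + x * p) : ℚ_[p]) ^ c ≠ 0 :=
    pow_ne_zero _ (norm_ne_zero_iff.1 (by simp [norm_primeToFactorial]))
  have h := congr_arg (Nat.cast (R := ℚ_[p])) (diagMultinomial_mul_primeToFactorial_pow hv c x)
  push_cast at h
  rw [div_mul_eq_mul_div, div_eq_div_iff hdiag hfac]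
  rw [h]
  ring

theorem pow_totient_eq_moebiusProd {G : Type*} [CommGroupWithZero G] {x : G} (hx : x ≠ 0) (N : ℕ) :
    x ^ N.totient = moebiusProd N.primeFactors fun d => x ^ (N / d) := by
  rw [moebiusProd_pow_div (fun _ => Nat.prime_of_mem_primeFactors) hx,
    card_filter_primeFactors_not_dvd]

theorem BB_eq_moebiusProd (N m : ℕ) :
    BB N m = moebiusProd N.primeFactors fun d => (diagMultinomial (N / d) m : ℚ) := by
  have hm : (m.factorial : ℚ) ≠ 0 := Nat.cast_ne_zero.2 m.factorial_ne_zero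
  have hdiag (c : ℕ) : (diagMultinomial c m : ℚ) = (c * m).factorial / (m.factorial : ℚ) ^ c := by
    rw [eq_div_iff (pow_ne_zero c hm), ← Nat.cast_pow, ← Nat.cast_mul,
      diagMultinomial_mul_factorial_pow]
  simp only [hdiag]
  rw [moebiusProd_div, ← pow_totient_eq_moebiusProd hm, moebiusProd_eq_prod_even_div_prod_odd,
    div_div, BB, Bnum, Bden, evenSub, oddSub]
  push_cast
  rfl

end DiagMultinomial

section DworkSeqBB

variable {p : ℕ} [hp : Fact p.Prime] {P : Finset ℕ}

theorem norm_prime_div_natCast {d : ℕ} (hd : Squarefree d) :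
    ‖(p / d : ℚ_[p])‖ = if p ∣ d then 1 else ‖(p : ℚ_[p])‖ := by
  split_ifs with hpd
  · obtain ⟨e, rfl⟩ := hpd
    have he : p.Coprime e := Nat.coprime_of_squarefree_mul hd
    have hpne : (p : ℚ_[p]) ≠ 0 := Nat.cast_ne_zero.2 hp.out.ne_zero
    rw [Nat.cast_mul, div_mul_cancel_left₀ hpne, norm_inv, Padic.norm_natCast_eq_one_iff.2 he,
      inv_one]
  · rw [norm_div, Padic.norm_natCast_eq_one_iff.2 (hp.out.coprime_iff_not_dvd.2 hpd), div_one]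

theorem squarefree_prod_primes (hP : ∀ q ∈ P, q.Prime) : Squarefree (∏ q ∈ P, q) :=
  squarefree_prod_of_pairwise_isCoprime (fun q hq r hr hqr =>
    Nat.coprime_iff_isRelPrime.1 ((Nat.coprime_primes (hP q hq) (hP r hr)).2 hqr))
    fun q hq => (hP q hq).prime.squarefree

theorem norm_moebiusProd_prime_div_pow (hP : ∀ q ∈ P, q.Prime) (L : ℕ) :
    ‖moebiusProd P fun d => (p / d : ℚ_[p]) ^ (L / d)‖ =
      ‖(p : ℚ_[p])‖ ^ #{k ∈ Icc 1 L | ∀ q ∈ P.erase p, ¬ q ∣ k} := by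
  have hP' : ∀ q ∈ P.erase p, q.Prime := fun q hq => hP q (mem_of_mem_erase hq)
  have hpne : ‖(p : ℚ_[p])‖ ≠ 0 := norm_ne_zero_iff.2 (Nat.cast_ne_zero.2 hp.out.ne_zero)
  calc ‖moebiusProd P fun d => (p / d : ℚ_[p]) ^ (L / d)‖
    _ = moebiusProd P fun d => ‖(p / d : ℚ_[p]) ^ (L / d)‖ := map_moebiusProd (normHom (α := ℚ_[p]))
    _ = moebiusProd P fun d => (if p ∣ d then 1 else ‖(p : ℚ_[p])‖) ^ (L / d) :=
      moebiusProd_congr fun d hd => by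
        rw [norm_pow, norm_prime_div_natCast ((squarefree_prod_primes hP).squarefree_of_dvd hd)]
    _ = moebiusProd (P.erase p) fun d => (if p ∣ d then 1 else ‖(p : ℚ_[p])‖) ^ (L / d) :=
      moebiusProd_erase fun d hd => by rw [if_pos hd, one_pow]
    _ = moebiusProd (P.erase p) fun d => ‖(p : ℚ_[p])‖ ^ (L / d) :=
      moebiusProd_congr fun d hd => by
        have hpd : ¬ p ∣ d := fun hpd => by
          obtain ⟨q, hq, hpq⟩ := (hp.out.prime.dvd_finsetProd_iff _).1 (hpd.trans hd)
          exact ne_of_mem_erase hq ((Nat.prime_dvd_prime_iff_eq hp.out (hP' q hq)).1 hpq).symm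
        rw [if_neg hpd]
    _ = ‖(p : ℚ_[p])‖ ^ #{k ∈ Icc 1 L | ∀ q ∈ P.erase p, ¬ q ∣ k} := moebiusProd_pow_div hP' hpne L

theorem prod_Icc_prime_mul_add {N d : ℕ} (hdN : d ∣ N) (hd : d ≠ 0) (v x : ℕ) :
    ∏ i ∈ Icc 1 (N / d * v / p), (p * ((N / d : ℕ) * x + i) : ℚ_[p]) =
      (p / d : ℚ_[p]) ^ (N * v / p / d) *
        ∏ i ∈ Icc 1 (N * v / p / d), ((N * x + i * d : ℕ) : ℚ_[p]) := by
  obtain ⟨M, rfl⟩ := hdN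
  have hd' : (d : ℚ_[p]) ≠ 0 := Nat.cast_ne_zero.2 hd
  have hL : d * M * v / p / d = M * v / p := by
    rw [Nat.div_right_comm, mul_assoc, Nat.mul_div_cancel_left _ (Nat.pos_of_ne_zero hd)]
  have hpow : (p / d : ℚ_[p]) ^ (M * v / p) = ∏ _i ∈ Icc 1 (M * v / p), (p / d : ℚ_[p]) := by
    rw [prod_const, Nat.card_Icc, Nat.add_sub_cancel]
  rw [hL, Nat.mul_div_cancel_left _ (Nat.pos_of_ne_zero hd), hpow, ← prod_mul_distrib]
  refine prod_congr rfl fun i _ => ?_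
  push_cast
  field_simp

theorem moebiusProd_prod_Icc_prime_mul_add (N v x : ℕ) :
    (moebiusProd N.primeFactors fun d =>
        ∏ i ∈ Icc 1 (N / d * v / p), (p * ((N / d : ℕ) * x + i) : ℚ_[p])) =
      (moebiusProd N.primeFactors fun d => (p / d : ℚ_[p]) ^ (N * v / p / d)) *
        ∏ k ∈ Icc 1 (N * v / p) with ∀ q ∈ N.primeFactors, ¬ q ∣ k, ((N * x + k : ℕ) : ℚ_[p]) := by
  rw [← moebiusProd_prod_Icc (fun _ => Nat.prime_of_mem_primeFactors)
    (fun k hk => Nat.cast_ne_zero.2 (by omega)), ← moebiusProd_mul]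
  refine moebiusProd_congr fun d hd => ?_
  have hd0 : d ≠ 0 := by
    rintro rfl
    exact prod_ne_zero_iff.2 (fun q hq => (Nat.prime_of_mem_primeFactors hq).ne_zero)
      (zero_dvd_iff.1 hd)
  exact prod_Icc_prime_mul_add (hd.trans N.prod_primeFactors_dvd) hd0 v x

theorem isDworkFactor_moebiusProd_prod_Icc (N v : ℕ) :
    IsDworkFactor p fun x => moebiusProd N.primeFactors fun d =>
      ∏ i ∈ Icc 1 (N / d * v / p), (p * ((N / d : ℕ) * x + i) : ℚ_[p]) := by
  simp only [moebiusProd_prod_Icc_prime_mul_add]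
  have hnorm := norm_moebiusProd_prime_div_pow (p := p)
    (fun _ => Nat.prime_of_mem_primeFactors (n := N)) (N * v / p)
  set C := moebiusProd N.primeFactors fun d => (p / d : ℚ_[p]) ^ (N * v / p / d)
  by_cases hpN : p ∣ N
  · have hC : ‖C‖ ≤ 1 :=
      hnorm.trans_le (pow_le_one₀ (norm_nonneg _) (IsUltrametricDist.norm_natCast_le_one _ p))
    exact (IsDworkFactor.const hC).mul
      (IsDworkFactor.prod fun k _ => IsDworkFactor.natCast_mul_add hpN k)
  · rw [erase_eq_of_notMem fun h => hpN (Nat.dvd_of_mem_primeFactors h)] at hnorm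
    set S := (Icc 1 (N * v / p)).filter fun k => ∀ q ∈ N.primeFactors, ¬ q ∣ k
    have hpow : (p : ℚ_[p]) ^ #S ≠ 0 := pow_ne_zero _ (Nat.cast_ne_zero.2 hp.out.ne_zero)
    have hC : ‖C / (p : ℚ_[p]) ^ #S‖ = 1 := by
      rw [norm_div, hnorm, norm_pow, div_self (by simpa using norm_ne_zero_iff.2 hpow)]
    have hprod (x : ℕ) : C * ∏ k ∈ S, ((N * x + k : ℕ) : ℚ_[p]) =
        C / (p : ℚ_[p]) ^ #S * ∏ k ∈ S, ((p * N * x + p * k : ℕ) : ℚ_[p]) := by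
      simp only [mul_assoc p, ← mul_add, Nat.cast_mul p, prod_mul_distrib, prod_const]
      rw [← mul_assoc, div_mul_cancel₀ _ hpow]
    simp only [hprod]
    exact (IsDworkFactor.const hC.le).mul
      (IsDworkFactor.prod fun k _ => IsDworkFactor.natCast_mul_add (dvd_mul_right p N) (p * k))

theorem isDworkSeq_BB (N : ℕ) : IsDworkSeq p fun m => (BB N m : ℚ_[p]) := by
  have hBB (m : ℕ) : (BB N m : ℚ_[p]) =
      moebiusProd N.primeFactors fun d => (diagMultinomial (N / d) m : ℚ_[p]) := by
    rw [BB_eq_moebiusProd, ← Rat.coe_castHom, map_moebiusProd]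
    simp
  simp only [hBB]
  refine ⟨?_, fun m => moebiusProd_ne_zero fun d =>
    Nat.cast_ne_zero.2 (diagMultinomial_pos _ m).ne', fun v hv => ?_⟩
  · simp [moebiusProd, diagMultinomial, Nat.multinomial]
  · simp only [← moebiusProd_div, diagMultinomial_div_diagMultinomial hv, moebiusProd_mul]
    exact (IsDworkFactor.moebiusProd
      (fun d => isDworkFactor_primeToFactorial_div_pow (N / d) v)
      fun d x => norm_primeToFactorial_div_pow (N / d) _).mul
      (isDworkFactor_moebiusProd_prod_Icc N v)

end DworkSeqBB

/-- Lemma 2 (Krattenthaler–Rivoal): for a prime `p` and `0 ≤ a < p`, the sum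
`𝐒(a,K,s,p,m) = Σ_{j=mp^s}^{(m+1)p^s−1} (𝐁_𝐍(a+jp)𝐁_𝐍(K−j) − 𝐁_𝐍(j)𝐁_𝐍(a+(K−j)p))`
lies in `p^{s+1}·𝐁_𝐍(m)·ℤ_p`. -/
theorem S_mem_pow_p_BBvec_zp (p : ℕ) [hp : Fact p.Prime] (a m s K : ℕ) (ha : a < p)
    {k : ℕ} (N : Fin k → ℕ) (hN : ∀ i, 0 < N i) :
    ‖((∑ j ∈ Finset.Ico (m * p ^ s) ((m + 1) * p ^ s),
          (BBvecZ N ((a : ℤ) + (j : ℤ) * p) * BBvecZ N ((K : ℤ) - (j : ℤ))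
            - BBvecZ N (j : ℤ) * BBvecZ N ((a : ℤ) + ((K : ℤ) - (j : ℤ)) * p)) : ℚ) : ℚ_[p])‖
      ≤ ‖(((p : ℚ) ^ (s + 1) * BBvec N m : ℚ) : ℚ_[p])‖ := by
  have hA : IsDworkSeq p fun n => (BBvec N n : ℚ_[p]) := by
    simpa only [BBvec, Rat.cast_prod] using IsDworkSeq.prod fun i _ => isDworkSeq_BB (N i)
  have hZ (n : ℤ) : (BBvecZ N n : ℚ_[p]) = extendZero (fun n => (BBvec N n : ℚ_[p])) n := by
    rw [BBvecZ, extendZero, apply_ite Rat.cast, Rat.cast_zero]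
  simp only [Rat.cast_sum, Rat.cast_sub, Rat.cast_mul, Rat.cast_pow, Rat.cast_natCast, hZ,
    norm_mul, norm_pow]
  exact hA.norm_dworkSum_le hp.out.one_lt ha s m K
end

section
/- For any prime p, any non-negative integers m and s, any positive integers N_1, N_2, …, N_k, and any integer L with 1 ≤ L ≤ max(N_1,…,N_k), the p-adic valuation of B_𝐍(m)·(H_{Lmp^s} − H_{L⌊m/p⌋p^{s+1}}) is at least v_p(M_𝐍) − v_p(Θ_L) − s, i.e., B_𝐍(m)·(H_{Lmp^s} − H_{L⌊m/p⌋p^{s+1}}) ∈ (M_𝐍/(p^s Θ_L))·ℤ_p. -/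
/-!
Modulo `ℤ₍ₚ₎` only the terms of `H_{ap}` whose index is a multiple of `p` survive in `p H_{ap}`,
so `p^s H_{ap^s} ≡ H_a`, and it suffices to treat `H_{Lm} - H_{Lp⌊m/p⌋}` up to the factor `p^s`.

The quotients `B_N(m)/N! = (Nm)!/(m!^N N!)` are integers, each dividing the next as `N` grows,
so `B_𝐍(m)/M_𝐍` is a multiple of `B_L(m)/L!`. If no multiple of `p` lies in `(c, m]`, then up to a
`p`-adic unit `B_L(m)/L!` is `B_L(c)/L!` times the product of the integers in `(Lc, Lm]`, and that
product clears the denominators of `H_{Lm} - H_{Lc}`. One takes `c = p⌊m/p⌋` when `m ≥ p`; when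
`m < p` this is `0`, so one takes `c = 1` instead and is left with `H_L`, whose denominator is
`Θ_L`.
-/

open Finset

/-- `B_N(m) = (Nm)!/m!^N`. -/
noncomputable def BQ (N m : ℕ) : ℚ := ((N * m).factorial : ℚ) / ((m.factorial : ℚ)) ^ N

/-- `B_𝐍(m) = ∏_{j=1}^k B_{N_j}(m)` for a vector `𝐍 = (N_1, …, N_k)`. -/
noncomputable def BQvec {k : ℕ} (N : Fin k → ℕ) (m : ℕ) : ℚ := ∏ i, BQ (N i) m

/-- `Θ_L`, the denominator of the harmonic number `H_L` written as a reduced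
fraction (equal to `L!/gcd(L!, L!·H_L)`). -/
def Theta (L : ℕ) : ℕ := (harm L).den

section Harmonic

theorem harm_eq_harmonic : harm = harmonic := by
  ext n
  simp [harm, harmonic]

theorem Theta_eq_den_harmonic (L : ℕ) : Theta L = (harmonic L).den := by
  rw [Theta, harm_eq_harmonic]

theorem exists_natCast_eq_ascFactorial_mul_harmonic_sub (a k : ℕ) :
    ∃ n : ℕ, (n : ℚ) = (a + 1).ascFactorial k * (harmonic (a + k) - harmonic a) := by
  induction k with
  | zero => exact ⟨0, by simp⟩
  | succ k ih =>
    obtain ⟨n, hn⟩ := ih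
    refine ⟨(a + 1 + k) * n + (a + 1).ascFactorial k, ?_⟩
    have hne : (a : ℚ) + k + 1 ≠ 0 := by positivity
    rw [← add_assoc, harmonic_succ, Nat.ascFactorial_succ]
    push_cast
    rw [hn]
    field_simp
    ring

end Harmonic

section UniformBell

theorem uniformBell_dvd_uniformBell {L N : ℕ} (h : L ≤ N) (m : ℕ) :
    L.uniformBell m ∣ N.uniformBell m := by
  induction N, h using Nat.le_induction with
  | base => rfl
  | succ N _ ih => exact ih.trans (Nat.uniformBell_succ_left N m ▸ dvd_mul_left _ _)

theorem uniformBell_dvd_prod_uniformBell {ι : Type*} {t : Finset ι} {N : ι → ℕ} {L : ℕ}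
    (hL : L ≤ t.sup N) (m : ℕ) : L.uniformBell m ∣ ∏ i ∈ t, (N i).uniformBell m := by
  rcases t.eq_empty_or_nonempty with rfl | ht
  · rw [sup_empty, bot_eq_zero, Nat.le_zero] at hL
    simp [hL, Nat.uniformBell_zero_left]
  · obtain ⟨i, hi, hsup⟩ := t.exists_mem_eq_sup ht N
    exact (uniformBell_dvd_uniformBell (hsup ▸ hL) m).trans
      (dvd_prod_of_mem (fun j ↦ (N j).uniformBell m) hi)

theorem ascFactorial_pow_mul_uniformBell_add (L k : ℕ) {a : ℕ} (ha : a ≠ 0) :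
    (a + 1).ascFactorial k ^ L * L.uniformBell (a + k) =
      L.uniformBell a * (L * a + 1).ascFactorial (L * k) := by
  have hpos : 0 < a.factorial ^ L * L.factorial := by positivity
  refine Nat.eq_of_mul_eq_mul_left hpos ?_
  calc a.factorial ^ L * L.factorial * ((a + 1).ascFactorial k ^ L * L.uniformBell (a + k))
      = L.uniformBell (a + k) * (a + k).factorial ^ L * L.factorial := by
        rw [← Nat.factorial_mul_ascFactorial a k]; ring
    _ = (L * a).factorial * (L * a + 1).ascFactorial (L * k) := by
        rw [Nat.uniformBell_mul_eq L (by omega), mul_add, Nat.factorial_mul_ascFactorial]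
    _ = a.factorial ^ L * L.factorial *
          (L.uniformBell a * (L * a + 1).ascFactorial (L * k)) := by
        rw [← Nat.uniformBell_mul_eq L ha]; ring

theorem BQ_eq_factorial_mul_uniformBell (N : ℕ) {m : ℕ} (hm : m ≠ 0) :
    BQ N m = N.factorial * N.uniformBell m := by
  have hne : (m.factorial : ℚ) ^ N ≠ 0 := by positivity
  rw [BQ, div_eq_iff hne, ← Nat.uniformBell_mul_eq N hm]
  push_cast
  ring

theorem BQvec_eq_prod_factorial_mul_prod_uniformBell {k : ℕ} (N : Fin k → ℕ) {m : ℕ}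
    (hm : m ≠ 0) :
    BQvec N m = (∏ i, ((N i).factorial : ℚ)) * ∏ i, ((N i).uniformBell m : ℚ) := by
  simp only [BQvec, BQ_eq_factorial_mul_uniformBell _ hm, prod_mul_distrib]

end UniformBell

section PadicIntegrality

theorem coprime_ascFactorial_mul_add_one {p : ℕ} (hp : p.Prime) (q : ℕ) {r : ℕ} (hr : r < p) :
    p.Coprime ((p * q + 1).ascFactorial r) := by
  rw [Nat.ascFactorial_eq_prod_range, Nat.coprime_prod_right_iff]
  intro i hi
  rw [mem_range] at hi
  rw [add_assoc, Nat.coprime_mul_left_add_right]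
  exact Nat.coprime_of_lt_prime (by omega) (by omega) hp

variable {p : ℕ} [hp : Fact p.Prime]

theorem mem_padicValuation_integer_of_natCast_mul_mem {u : ℕ} {x : ℚ} (hu : p.Coprime u)
    (h : u * x ∈ (Rat.padicValuation p).integer) : x ∈ (Rat.padicValuation p).integer := by
  have hu_unit : Rat.padicValuation p u = 1 := by
    rw [← Int.cast_natCast, Rat.padicValuation_cast, Int.padicValuation_eq_one_iff]
    exact_mod_cast hp.out.coprime_iff_not_dvd.1 hu
  rwa [Valuation.mem_integer_iff, map_mul, hu_unit, one_mul] at h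

theorem harmonic_add_sub_mem_of_coprime_ascFactorial {a k : ℕ}
    (h : p.Coprime ((a + 1).ascFactorial k)) :
    harmonic (a + k) - harmonic a ∈ (Rat.padicValuation p).integer := by
  obtain ⟨n, hn⟩ := exists_natCast_eq_ascFactorial_mul_harmonic_sub a k
  exact mem_padicValuation_integer_of_natCast_mul_mem h (hn ▸ natCast_mem _ n)

theorem prime_mul_harmonic_prime_mul_sub_mem (a : ℕ) :
    p * harmonic (p * a) - harmonic a ∈ (Rat.padicValuation p).integer := by
  induction a with
  | zero => simp
  | succ a ih =>
    have hblock : harmonic (p * a + (p - 1)) - harmonic (p * a) ∈ (Rat.padicValuation p).integer :=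
      harmonic_add_sub_mem_of_coprime_ascFactorial
        (coprime_ascFactorial_mul_add_one hp.out a (Nat.sub_one_lt hp.out.ne_zero))
    have hlast : harmonic (p * (a + 1)) =
        harmonic (p * a + (p - 1)) + ((p * (a + 1) : ℕ) : ℚ)⁻¹ := by
      have hidx : p * (a + 1) = p * a + (p - 1) + 1 := by
        rw [mul_add_one, add_assoc, Nat.sub_add_cancel hp.out.one_le]
      rw [hidx, harmonic_succ]
    have hsplit : p * harmonic (p * (a + 1)) - harmonic (a + 1) =
        (p * harmonic (p * a) - harmonic a) +
          p * (harmonic (p * a + (p - 1)) - harmonic (p * a)) := by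
      have hp_ne : (p : ℚ) ≠ 0 := mod_cast hp.out.ne_zero
      have ha_ne : (a : ℚ) + 1 ≠ 0 := by positivity
      rw [hlast, harmonic_succ]
      push_cast
      field_simp
      ring
    rw [hsplit]
    exact add_mem ih (mul_mem (natCast_mem _ p) hblock)

theorem prime_pow_mul_harmonic_mul_prime_pow_sub_mem (a s : ℕ) :
    (p : ℚ) ^ s * harmonic (a * p ^ s) - harmonic a ∈ (Rat.padicValuation p).integer := by
  induction s with
  | zero => simp
  | succ s ih =>
    have hsplit : (p : ℚ) ^ (s + 1) * harmonic (a * p ^ (s + 1)) - harmonic a =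
        (p : ℚ) ^ s * (p * harmonic (p * (a * p ^ s)) - harmonic (a * p ^ s)) +
          ((p : ℚ) ^ s * harmonic (a * p ^ s) - harmonic a) := by
      rw [show a * p ^ (s + 1) = p * (a * p ^ s) by ring]
      ring
    rw [hsplit]
    exact add_mem (mul_mem (pow_mem (natCast_mem _ p) s)
      (prime_mul_harmonic_prime_mul_sub_mem _)) ih

theorem uniformBell_mul_harmonic_sub_mem_of_coprime_ascFactorial (L : ℕ) {a k : ℕ} (ha : a ≠ 0)
    (h : p.Coprime ((a + 1).ascFactorial k)) :
    L.uniformBell (a + k) * (harmonic (L * (a + k)) - harmonic (L * a)) ∈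
      (Rat.padicValuation p).integer := by
  obtain ⟨n, hn⟩ := exists_natCast_eq_ascFactorial_mul_harmonic_sub (L * a) (L * k)
  have hbell : ((a + 1).ascFactorial k ^ L : ℕ) * (L.uniformBell (a + k) : ℚ) =
      L.uniformBell a * (L * a + 1).ascFactorial (L * k) :=
    mod_cast ascFactorial_pow_mul_uniformBell_add L k ha
  refine mem_padicValuation_integer_of_natCast_mul_mem (h.pow_right L) ?_
  rw [← mul_assoc, hbell, mul_assoc, mul_add L a k, ← hn]
  exact mul_mem (natCast_mem _ _) (natCast_mem _ n)

theorem den_harmonic_mul_uniformBell_mul_harmonic_mem_of_lt (L : ℕ) {m : ℕ} (hmp : m < p) :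
    (harmonic L).den * (L.uniformBell m * harmonic (L * m)) ∈ (Rat.padicValuation p).integer := by
  rcases eq_or_ne m 0 with rfl | hm
  · simp
  obtain ⟨k, rfl⟩ := Nat.exists_eq_add_of_le (Nat.one_le_iff_ne_zero.2 hm)
  have hcop : p.Coprime ((1 + 1).ascFactorial k) := by
    have hfact : (1 + 1).ascFactorial k = (1 + k).factorial := by
      simpa using Nat.factorial_mul_ascFactorial 1 k
    exact hfact ▸ hp.out.coprime_factorial_of_lt hmp
  have hdiff := uniformBell_mul_harmonic_sub_mem_of_coprime_ascFactorial L one_ne_zero hcop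
  rw [mul_one] at hdiff
  have hden : (harmonic L).den * harmonic L ∈ (Rat.padicValuation p).integer := by
    rw [Rat.den_mul_eq_num]
    exact intCast_mem _ _
  have hsplit : (harmonic L).den * (L.uniformBell (1 + k) * harmonic (L * (1 + k))) =
      (harmonic L).den * (L.uniformBell (1 + k) * (harmonic (L * (1 + k)) - harmonic L)) +
        L.uniformBell (1 + k) * ((harmonic L).den * harmonic L) := by
    ring
  rw [hsplit]
  exact add_mem (mul_mem (natCast_mem _ _) hdiff) (mul_mem (natCast_mem _ _) hden)

theorem den_harmonic_mul_uniformBell_mul_harmonic_sub_mem (L m : ℕ) :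
    (harmonic L).den * (L.uniformBell m * (harmonic (L * m) - harmonic (L * (p * (m / p))))) ∈
      (Rat.padicValuation p).integer := by
  rcases eq_or_ne (m / p) 0 with hq | hq
  · have hmp : m < p := (Nat.div_eq_zero_iff_lt hp.out.pos).1 hq
    simpa [hq] using den_harmonic_mul_uniformBell_mul_harmonic_mem_of_lt L hmp
  · have hcop := coprime_ascFactorial_mul_add_one hp.out (m / p) (m.mod_lt hp.out.pos)
    have hdiff := uniformBell_mul_harmonic_sub_mem_of_coprime_ascFactorial L
      (mul_ne_zero hp.out.ne_zero hq) hcop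
    rw [Nat.div_add_mod] at hdiff
    exact mul_mem (natCast_mem _ _) hdiff

theorem prime_pow_mul_den_harmonic_mul_uniformBell_mul_harmonic_sub_mem (L m s : ℕ) :
    (p : ℚ) ^ s * (harmonic L).den * (L.uniformBell m *
      (harmonic (L * m * p ^ s) - harmonic (L * (m / p) * p ^ (s + 1)))) ∈
      (Rat.padicValuation p).integer := by
  have hupper := prime_pow_mul_harmonic_mul_prime_pow_sub_mem (p := p) (L * m) s
  have hlower := prime_pow_mul_harmonic_mul_prime_pow_sub_mem (p := p) (L * (p * (m / p))) s
  have hmain := den_harmonic_mul_uniformBell_mul_harmonic_sub_mem (p := p) L m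
  rw [show L * (m / p) * p ^ (s + 1) = L * (p * (m / p)) * p ^ s by ring]
  convert add_mem hmain (mul_mem
    (natCast_mem (Rat.padicValuation p).integer ((harmonic L).den * L.uniformBell m))
    (sub_mem hupper hlower)) using 1
  push_cast
  ring

end PadicIntegrality

/-- Lemma 5 (Krattenthaler–Rivoal): for a prime `p`, `m, s ≥ 0`, positive integers
`N_1, …, N_k`, `M_𝐍 = ∏_i N_i!` and `1 ≤ L ≤ max(N_1, …, N_k)`, one has
`B_𝐍(m)·(H_{Lmp^s} − H_{L⌊m/p⌋p^{s+1}}) ∈ (M_𝐍/(p^s·Θ_L))·ℤ_p`. -/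
theorem BQvec_mul_harm_diff_mem_M_pow_p_theta_zp (p : ℕ) [hp : Fact p.Prime] (m s : ℕ)
    {k : ℕ} (N : Fin k → ℕ) (hN : ∀ i, 0 < N i)
    (L : ℕ) (hL1 : 1 ≤ L) (hL2 : L ≤ Finset.univ.sup N) :
    ‖((BQvec N m * (harm (L * m * p ^ s) - harm (L * (m / p) * p ^ (s + 1))) : ℚ) : ℚ_[p])‖
      ≤ ‖(((∏ i, ((N i).factorial : ℚ)) / ((p : ℚ) ^ s * (Theta L : ℚ)) : ℚ) : ℚ_[p])‖ := by
  rcases eq_or_ne m 0 with rfl | hm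
  · simp only [mul_zero, zero_mul, Nat.zero_div, sub_self, Rat.cast_zero, norm_zero, norm_nonneg]
  rw [Theta_eq_den_harmonic, harm_eq_harmonic]
  set D := harmonic (L * m * p ^ s) - harmonic (L * (m / p) * p ^ (s + 1))
  obtain ⟨c, hc⟩ := uniformBell_dvd_prod_uniformBell hL2 m
  have hB : BQvec N m = (∏ i, ((N i).factorial : ℚ)) * (L.uniformBell m * c) := by
    rw [BQvec_eq_prod_factorial_mul_prod_uniformBell N hm]
    exact_mod_cast congrArg ((∏ i, (N i).factorial) * ·) hc
  have hmem : c * ((p : ℚ) ^ s * (harmonic L).den * (L.uniformBell m * D)) ∈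
      (Rat.padicValuation p).integer :=
    mul_mem (natCast_mem _ c)
      (prime_pow_mul_den_harmonic_mul_uniformBell_mul_harmonic_sub_mem L m s)
  have hfactor : BQvec N m * D = (∏ i, ((N i).factorial : ℚ)) / (p ^ s * (harmonic L).den) *
      (c * (p ^ s * (harmonic L).den * (L.uniformBell m * D))) := by
    have hp_ne : (p : ℚ) ≠ 0 := mod_cast hp.out.ne_zero
    rw [hB]
    field_simp
  rw [hfactor, Rat.cast_mul, norm_mul]
  exact mul_le_of_le_one_right (norm_nonneg _)
    ((Padic.norm_rat_le_one_iff_padicValuation_le_one p).2 hmem)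
end
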